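/- Let d > 0 and b ∈ ℝ with b ≠ 0. There exists a constant C ≥ 1, depending only on d and b, such that the following holds for all t ≥ 0 and η ∈ (0,1]: if w₁(·,s), w₂(·,s), w₃(·,s) ∈ W^{1,1}(ℝ,ℂ) for each s ∈ [0,t] with s ↦ w_i(·,s) measurable, and ‖w_i(·,s)‖_{L¹} ≤ η (1+s)^{−1/2} and ‖∂_k w_i(·,s)‖_{L¹} ≤ η for i = 1,2,3 and all s ∈ [0,t], then for a ∈ {0,1}: ∫_ℝ |k|^a | ∫_0^t ∫_ℝ ∫_ℝ e^{−d k² (t−s) + i b ζ s} w₁(k−ξ, s) w₂(ξ−ζ, s) w₃(ζ, s) dζ dξ ds | dk ≤ C η³ (1+t)^{−(1+a)/2}. -/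

import Mathlib

/-!
The phase `e^{ibζs}` changes sign when `ζ` is shifted by half a period `π / (bs)`, so the innermost
integral is half of one with an amplitude difference under such a shift; for functions in `W^{1,1}`
that difference is `O(1 / (|b| s))`. Hence the convolution of `w₂` and `w₃` has `L¹` norm
`O(η² (1+s)^{-3/2})` instead of the trivial `O(η² (1+s)^{-1})`. Convolving with `w₁`, which lies in
`L¹` with norm `O(η (1+s)^{-1/2})` and, as an element of `W^{1,1}`, in `L^∞` with norm `O(η)`,
bounds the cubic term by `η³ (1+s)^{-2}` in `L¹` and by `η³ (1+s)^{-3/2}` in `L^∞`. The weight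
`|k|^a e^{-dk²(t-s)}` costs `(t-s)^{-a/2}` against the former and `(t-s)^{-(1+a)/2}` against the
latter. The `L¹` bound is used for `s` near `t` and the `L^∞` bound for `s` away from `t`, so that
in both regimes the time integral converges to `O((1+t)^{-(1+a)/2})`.
-/

open MeasureTheory Real

noncomputable section

/-- `v'` is the weak derivative of `v : ℝ → ℂ`. -/
def HasWeakDeriv (v v' : ℝ → ℂ) : Prop :=
  LocallyIntegrable v volume ∧ LocallyIntegrable v' volume ∧
    ∀ φ : ℝ → ℝ, ContDiff ℝ (⊤ : ℕ∞) φ → HasCompactSupport φ →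
      ∫ k, Complex.ofReal (deriv φ k) * v k = -∫ k, Complex.ofReal (φ k) * v' k

/-- `e^{x + iy}` for real `x, y`. -/
def expc (x y : ℝ) : ℂ := Complex.exp (Complex.ofReal x + Complex.ofReal y * Complex.I)

open Set Filter
open scoped ENNReal Interval

section IntegralCompAdd

variable {ψ : ℝ → ℝ}

lemma hasDerivAt_integral_comp_add (hψ : Continuous ψ) (r x : ℝ) :
    HasDerivAt (fun x => ∫ u in (0 : ℝ)..r, ψ (x + u)) (ψ (x + r) - ψ x) x := by
  have hwindow : (fun x => ∫ u in (0 : ℝ)..r, ψ (x + u)) =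
      fun x => (∫ y in (0 : ℝ)..x + r, ψ y) - ∫ y in (0 : ℝ)..x, ψ y := by
    funext x
    rw [intervalIntegral.integral_comp_add_left ψ, add_zero,
      intervalIntegral.integral_interval_sub_left (hψ.intervalIntegrable _ _)
        (hψ.intervalIntegrable _ _)]
  have hprimitive (z : ℝ) : HasDerivAt (fun z => ∫ y in (0 : ℝ)..z, ψ y) (ψ z) z :=
    (hψ.integral_hasStrictDerivAt 0 z).hasDerivAt
  rw [hwindow]
  exact ((hprimitive (x + r)).comp_add_const x r).sub (hprimitive x)

lemma contDiff_integral_comp_add (hψ : ContDiff ℝ (⊤ : ℕ∞) ψ) (r : ℝ) :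
    ContDiff ℝ (⊤ : ℕ∞) fun x => ∫ u in (0 : ℝ)..r, ψ (x + u) := by
  have hderiv := hasDerivAt_integral_comp_add hψ.continuous r
  rw [contDiff_infty_iff_deriv, funext fun x => (hderiv x).deriv]
  exact ⟨fun x => (hderiv x).differentiableAt, by fun_prop⟩

lemma hasCompactSupport_integral_comp_add (hc : HasCompactSupport ψ) (r : ℝ) :
    HasCompactSupport fun x => ∫ u in (0 : ℝ)..r, ψ (x + u) := by
  refine HasCompactSupport.intro
    ((hc.isCompact.prod (isCompact_uIcc (a := 0) (b := r))).image continuous_sub) fun x hx => ?_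
  have hzero : EqOn (fun u => ψ (x + u)) (fun _ => 0) (uIcc 0 r) := fun u hu =>
    image_eq_zero_of_notMem_tsupport fun hxu =>
      hx ⟨(x + u, u), ⟨hxu, hu⟩, add_sub_cancel_right x u⟩
  rw [intervalIntegral.integral_congr hzero, intervalIntegral.integral_zero]

end IntegralCompAdd

lemma integral_intervalIntegral_swap {α E : Type*} [MeasurableSpace α] [NormedAddCommGroup E]
    [NormedSpace ℝ E] {μ : Measure α} [SFinite μ] {F : α → ℝ → E} {a b : ℝ}
    (hF : Integrable (Function.uncurry F) (μ.prod (volume.restrict (Ι a b)))) :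
    ∫ x, (∫ u in a..b, F x u) ∂μ = ∫ u in a..b, ∫ x, F x u ∂μ := by
  simp only [intervalIntegral.intervalIntegral_eq_integral_uIoc, integral_smul]
  rw [integral_integral_swap hF]

section SubMul

variable {G : Type*} [AddGroup G] [MeasurableSpace G] [MeasurableAdd₂ G] [MeasurableNeg G]
  {μ ν : Measure G} [SFinite μ] [SFinite ν] [μ.IsAddRightInvariant] {F H : G → ℝ≥0∞}

lemma aemeasurable_comp_sub_mul (hF : AEMeasurable F μ) (hH : AEMeasurable H ν) :
    AEMeasurable (fun p : G × G => F (p.1 - p.2) * H p.2) (μ.prod ν) :=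
  (hF.comp_quasiMeasurePreserving (quasiMeasurePreserving_sub_of_right_invariant μ ν)).mul
    hH.comp_snd

lemma lintegral_lintegral_sub_mul (hF : AEMeasurable F μ) (hH : AEMeasurable H ν) :
    ∫⁻ x, ∫⁻ y, F (x - y) * H y ∂ν ∂μ = (∫⁻ x, F x ∂μ) * ∫⁻ y, H y ∂ν := by
  rw [lintegral_lintegral_swap (aemeasurable_comp_sub_mul hF hH), ← lintegral_const_mul'' _ hH]
  refine lintegral_congr fun y => ?_
  have hFy : AEMeasurable (fun x => F (x - y)) μ :=
    hF.comp_quasiMeasurePreserving (measurePreserving_sub_right μ y).quasiMeasurePreserving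
  rw [lintegral_mul_const'' _ hFy, lintegral_sub_right_eq_self]

end SubMul

lemma integrable_comp_sub_prod_uIoc {f : ℝ → ℂ} (hf : Integrable f) (a b : ℝ) :
    Integrable (fun p : ℝ × ℝ => f (p.1 - p.2)) (volume.prod (volume.restrict (Ι a b))) := by
  have : IsFiniteMeasure (volume.restrict (Ι a b)) := isFiniteMeasure_restrict_Ioc _ _
  simpa using (integrable_const (1 : ℂ)).convolution_integrand (μ := volume)
    (ν := volume.restrict (Ι a b)) (ContinuousLinearMap.mul ℝ ℂ) hf

lemma integral_integral_comp_add_mul {f : ℝ → ℂ} (hf : Integrable f) {ψ : ℝ → ℝ}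
    (hψ : Continuous ψ) (hc : HasCompactSupport ψ) (r : ℝ) :
    ∫ x, ((∫ u in (0 : ℝ)..r, ψ (x + u) : ℝ) : ℂ) * f x =
      ∫ x, ψ x * ∫ u in (0 : ℝ)..r, f (x - u) := by
  obtain ⟨M, hM⟩ := hψ.bounded_above_of_compact_support hc
  have hright : Integrable (fun p : ℝ × ℝ => (ψ p.1 : ℂ) * f (p.1 - p.2))
      (volume.prod (volume.restrict (Ι 0 r))) :=
    (integrable_comp_sub_prod_uIoc hf 0 r).bdd_mul
      (Continuous.aestronglyMeasurable (by fun_prop))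
      (Eventually.of_forall fun p => (Complex.norm_real _).trans_le (hM p.1))
  have : IsFiniteMeasure (volume.restrict (Ι 0 r)) := isFiniteMeasure_restrict_Ioc _ _
  have hleft : Integrable (fun p : ℝ × ℝ => (ψ (p.1 + p.2) : ℂ) * f p.1)
      (volume.prod (volume.restrict (Ι 0 r))) :=
    (hf.comp_fst _).bdd_mul (Continuous.aestronglyMeasurable (by fun_prop))
      (Eventually.of_forall fun p => (Complex.norm_real _).trans_le (hM (p.1 + p.2)))
  calc ∫ x, ((∫ u in (0 : ℝ)..r, ψ (x + u) : ℝ) : ℂ) * f x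
      = ∫ x, ∫ u in (0 : ℝ)..r, (ψ (x + u) : ℂ) * f x := by
        simp only [intervalIntegral.integral_mul_const, intervalIntegral.integral_ofReal]
    _ = ∫ u in (0 : ℝ)..r, ∫ x, (ψ (x + u) : ℂ) * f x := integral_intervalIntegral_swap hleft
    _ = ∫ u in (0 : ℝ)..r, ∫ x, (ψ x : ℂ) * f (x - u) := by
        refine intervalIntegral.integral_congr fun u _ => ?_
        simpa using integral_add_right_eq_self (μ := volume)
          (fun x => (ψ x : ℂ) * f (x - u)) u
    _ = ∫ x, ∫ u in (0 : ℝ)..r, (ψ x : ℂ) * f (x - u) :=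
        (integral_intervalIntegral_swap hright).symm
    _ = ∫ x, ψ x * ∫ u in (0 : ℝ)..r, f (x - u) := by
        simp only [intervalIntegral.integral_const_mul]

/-- Membership of `v` in the Sobolev space `W^{1,1}(ℝ, ℂ)`, with `v'` as weak derivative. -/
structure MemW11 (v v' : ℝ → ℂ) : Prop where
  hasWeakDeriv : HasWeakDeriv v v'
  integrable : Integrable v
  integrable_deriv : Integrable v'

namespace MemW11

variable {v v' : ℝ → ℂ}

-- Testing the weak derivative against the window integrals of `ψ` moves the window onto `v'`.
lemma ae_sub_translate_eq_integral (h : MemW11 v v') (r : ℝ) :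
    ∀ᵐ x, v x - v (x - r) = ∫ u in (0 : ℝ)..r, v' (x - u) := by
  have hlhs : Integrable fun x => v x - v (x - r) :=
    h.integrable.sub (h.integrable.comp_sub_right r)
  have hrhs : Integrable fun x => ∫ u in (0 : ℝ)..r, v' (x - u) := by
    simp only [intervalIntegral.intervalIntegral_eq_integral_uIoc]
    exact (integrable_comp_sub_prod_uIoc h.integrable_deriv 0 r).integral_prod_left.smul _
  refine ae_eq_of_integral_contDiff_smul_eq (E := ℝ) hlhs.locallyIntegrable hrhs.locallyIntegrable
    fun ψ hψ hc => ?_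
  have hweak := h.hasWeakDeriv.2.2 _ (contDiff_integral_comp_add hψ r)
    (hasCompactSupport_integral_comp_add hc r)
  simp only [(hasDerivAt_integral_comp_add hψ.continuous r _).deriv] at hweak
  rw [integral_integral_comp_add_mul h.integrable_deriv hψ.continuous hc] at hweak
  obtain ⟨M, hM⟩ := hψ.continuous.bounded_above_of_compact_support hc
  have hψv {f : ℝ → ℂ} (hf : Integrable f) (a : ℝ) : Integrable fun x => (ψ (x + a) : ℂ) * f x :=
    hf.bdd_mul (Continuous.aestronglyMeasurable (by fun_prop))
      (Eventually.of_forall fun x => (Complex.norm_real _).trans_le (hM (x + a)))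
  have hshift : ∫ x, (ψ (x + r) : ℂ) * v x = ∫ x, (ψ x : ℂ) * v (x - r) := by
    simpa using integral_add_right_eq_self (μ := volume) (fun x => (ψ x : ℂ) * v (x - r)) r
  have h₀ := hψv h.integrable 0
  have h₁ := hψv (h.integrable.comp_sub_right r) 0
  simp only [add_zero] at h₀ h₁
  simp only [Complex.real_smul, mul_sub]
  simp only [Complex.ofReal_sub, sub_mul] at hweak
  rw [integral_sub (hψv h.integrable r) h₀, hshift] at hweak
  rw [integral_sub h₀ h₁]
  linear_combination -hweak

lemma lintegral_enorm_sub_translate_le (h : MemW11 v v') (r : ℝ) :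
    ∫⁻ x, ‖v x - v (x - r)‖ₑ ≤ (∫⁻ x, ‖v' x‖ₑ) * ENNReal.ofReal |r| := by
  calc ∫⁻ x, ‖v x - v (x - r)‖ₑ
      = ∫⁻ x, ‖∫ u in (0 : ℝ)..r, v' (x - u)‖ₑ := by
        refine lintegral_congr_ae ?_
        filter_upwards [h.ae_sub_translate_eq_integral r] with x hx
        rw [hx]
    _ ≤ ∫⁻ x, ∫⁻ u in Ι 0 r, ‖v' (x - u)‖ₑ * 1 := by
        refine lintegral_mono fun x => ?_
        rw [← ofReal_norm, intervalIntegral.norm_intervalIntegral_eq, ofReal_norm]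
        simpa using enorm_integral_le_lintegral_enorm _
    _ = (∫⁻ x, ‖v' x‖ₑ) * ENNReal.ofReal |r| := by
        rw [lintegral_lintegral_sub_mul h.integrable_deriv.aestronglyMeasurable.enorm
          aemeasurable_const]
        simp [uIoc, max_sub_min_eq_abs]

lemma ae_enorm_sub_translate_le (h : MemW11 v v') (r : ℝ) :
    ∀ᵐ x, ‖v x - v (x - r)‖ₑ ≤ ∫⁻ y, ‖v' y‖ₑ := by
  filter_upwards [h.ae_sub_translate_eq_integral r] with x hx
  rw [hx, ← ofReal_norm, intervalIntegral.norm_intervalIntegral_eq, ofReal_norm]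
  calc _ ≤ ∫⁻ u in Ι 0 r, ‖v' (x - u)‖ₑ := enorm_integral_le_lintegral_enorm _
    _ ≤ ∫⁻ u, ‖v' (x - u)‖ₑ := setLIntegral_le_lintegral _ _
    _ = ∫⁻ y, ‖v' y‖ₑ := lintegral_sub_left_eq_self (fun y => ‖v' y‖ₑ) x

lemma ae_enorm_le (h : MemW11 v v') : ∀ᵐ x, ‖v x‖ₑ ≤ ∫⁻ y, ‖v' y‖ₑ := by
  set M := ∫⁻ y, ‖v' y‖ₑ
  have hexcess (r : ℝ) : ∀ᵐ x, ‖v x‖ₑ - M ≤ ‖v (x - r)‖ₑ := by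
    filter_upwards [h.ae_enorm_sub_translate_le r] with x hx
    rw [tsub_le_iff_left]
    calc ‖v x‖ₑ = ‖(v x - v (x - r)) + v (x - r)‖ₑ := by rw [sub_add_cancel]
      _ ≤ M + ‖v (x - r)‖ₑ := (enorm_add_le _ _).trans (by gcongr)
  have hmeas : AEMeasurable fun x => ‖v x‖ₑ := h.integrable.aestronglyMeasurable.enorm
  suffices (fun x => ‖v x‖ₑ - M) =ᵐ[volume] 0 by
    filter_upwards [this] with x hx
    exact tsub_eq_zero_iff_le.1 hx
  refine ae_of_forall_measure_lt_top_ae_restrict _ fun s _ hs => ?_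
  rw [← Filter.EventuallyEq, ← lintegral_eq_zero_iff' (hmeas.sub_const M).restrict]
  -- The excess does not depend on `r`, so integrating `hexcess` over all `r` gives an infinite
  -- left side unless the excess vanishes, against a finite right side.
  by_contra hne
  have hfinite : ∫⁻ _ : ℝ, ∫⁻ x in s, (‖v x‖ₑ - M) < ∞ := by
    calc _ ≤ ∫⁻ r : ℝ, ∫⁻ x in s, ‖v (x - r)‖ₑ :=
          lintegral_mono fun r => lintegral_mono_ae (ae_restrict_of_ae (hexcess r))
      _ = (∫⁻ x, ‖v x‖ₑ) * volume s := by
          rw [← lintegral_neg_eq_self fun x => ‖v x‖ₑ]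
          simpa using lintegral_lintegral_sub_mul (ν := volume.restrict s)
            h.integrable.comp_neg.aestronglyMeasurable.enorm (aemeasurable_const (b := 1))
      _ < ∞ := ENNReal.mul_lt_top h.integrable.2 hs
  simp [hne] at hfinite

end MemW11

lemma norm_expc (x y : ℝ) : ‖expc x y‖ = Real.exp x := by
  rw [expc, Complex.norm_exp]
  simp

lemma enorm_expc_zero (y : ℝ) : ‖expc 0 y‖ₑ = 1 := by
  rw [← ofReal_norm, norm_expc]
  simp

lemma expc_eq_exp_mul (x y : ℝ) : expc x y = Real.exp x * expc 0 y := by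
  simp [expc, Complex.exp_add]

@[fun_prop]
lemma measurable_expc : Measurable (Function.uncurry expc) := by
  unfold expc Function.uncurry
  fun_prop

lemma expc_zero_sub_pi (y : ℝ) : expc 0 (y - π) = -expc 0 y := by
  simp [expc, sub_mul, Complex.exp_sub, div_neg]

-- Averaging the integral with its translate by half a period, which flips the sign of the phase,
-- replaces the amplitude by a difference.
lemma enorm_integral_expc_mul_le {c : ℝ} (hc : c ≠ 0) (f : ℝ → ℂ) :
    2 * ‖∫ ζ, expc 0 (c * ζ) * f ζ‖ₑ ≤ ∫⁻ ζ, ‖f ζ - f (ζ - π / c)‖ₑ := by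
  by_cases hf : Integrable fun ζ => expc 0 (c * ζ) * f ζ
  swap
  · simp [integral_undef hf]
  have hshift : ∫ ζ, -expc 0 (c * ζ) * f (ζ - π / c) = ∫ ζ, expc 0 (c * ζ) * f ζ := by
    rw [← integral_sub_right_eq_self (fun ζ => expc 0 (c * ζ) * f ζ) (π / c)]
    simp only [mul_sub, mul_div_cancel₀ π hc, expc_zero_sub_pi]
  have hf_shift : Integrable fun ζ => -expc 0 (c * ζ) * f (ζ - π / c) := by
    simpa only [mul_sub, mul_div_cancel₀ π hc, expc_zero_sub_pi] using hf.comp_sub_right (π / c)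
  calc 2 * ‖∫ ζ, expc 0 (c * ζ) * f ζ‖ₑ
      = ‖(∫ ζ, expc 0 (c * ζ) * f ζ) + ∫ ζ, expc 0 (c * ζ) * f ζ‖ₑ := by
        rw [← two_mul, enorm_mul, ← ofReal_norm (2 : ℂ)]
        simp
    _ = ‖∫ ζ, expc 0 (c * ζ) * (f ζ - f (ζ - π / c))‖ₑ := by
        nth_rw 2 [← hshift]
        rw [← integral_add hf hf_shift]
        simp only [neg_mul, mul_sub, ← sub_eq_add_neg]
    _ ≤ ∫⁻ ζ, ‖f ζ - f (ζ - π / c)‖ₑ := by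
        refine (enorm_integral_le_lintegral_enorm _).trans_eq (lintegral_congr fun ζ => ?_)
        rw [enorm_mul, enorm_expc_zero, one_mul]

/-- The oscillatory convolution `∫ e^{icζ} f(ξ - ζ) g(ζ) dζ`: the innermost integral of the
Duhamel term, with the phase `e^{ibζs}` at frequency `c = bs`. -/
def oscConv (c : ℝ) (f g : ℝ → ℂ) (ξ : ℝ) : ℂ :=
  ∫ ζ, expc 0 (c * ζ) * (f (ξ - ζ) * g ζ)

lemma aestronglyMeasurable_oscConv (c : ℝ) {f g : ℝ → ℂ} (hf : AEStronglyMeasurable f)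
    (hg : AEStronglyMeasurable g) : AEStronglyMeasurable (oscConv c f g) := by
  have hphase : Measurable fun p : ℝ × ℝ => expc 0 (c * p.2) := by fun_prop
  have hsub : AEStronglyMeasurable fun p : ℝ × ℝ => f (p.1 - p.2) :=
    hf.comp_quasiMeasurePreserving (quasiMeasurePreserving_sub_of_right_invariant volume volume)
  exact (hphase.aestronglyMeasurable.mul (hsub.mul hg.comp_snd)).integral_prod_right'

lemma lintegral_enorm_oscConv_le (c : ℝ) {f g : ℝ → ℂ} (hf : AEStronglyMeasurable f)
    (hg : AEStronglyMeasurable g) :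
    ∫⁻ ξ, ‖oscConv c f g ξ‖ₑ ≤ (∫⁻ x, ‖f x‖ₑ) * ∫⁻ x, ‖g x‖ₑ := by
  rw [← lintegral_lintegral_sub_mul hf.enorm hg.enorm]
  refine lintegral_mono fun ξ => (enorm_integral_le_lintegral_enorm _).trans_eq ?_
  simp only [enorm_mul, enorm_expc_zero, one_mul]

lemma enorm_oscConv_le_lintegral_sub {c : ℝ} (hc : c ≠ 0) (f g : ℝ → ℂ) (ξ : ℝ) :
    2 * ‖oscConv c f g ξ‖ₑ ≤
      ∫⁻ ζ, (‖f (ξ - ζ) - f (ξ - ζ - -(π / c))‖ₑ * ‖g ζ‖ₑ +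
        ‖f (ξ - ζ - -(π / c))‖ₑ * ‖g ζ - g (ζ - π / c)‖ₑ) := by
  refine (enorm_integral_expc_mul_le hc _).trans (lintegral_mono fun ζ => ?_)
  have hsplit : f (ξ - ζ) * g ζ - f (ξ - (ζ - π / c)) * g (ζ - π / c) =
      (f (ξ - ζ) - f (ξ - ζ - -(π / c))) * g ζ +
        f (ξ - ζ - -(π / c)) * (g ζ - g (ζ - π / c)) := by
    rw [show ξ - (ζ - π / c) = ξ - ζ - -(π / c) by ring]
    ring
  simp only [hsplit, ← enorm_mul]
  exact enorm_add_le _ _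

lemma MemW11.lintegral_enorm_oscConv_le {c : ℝ} (hc : c ≠ 0) {f f' g g' : ℝ → ℂ}
    (hf : MemW11 f f') (hg : MemW11 g g') :
    2 * ∫⁻ ξ, ‖oscConv c f g ξ‖ₑ ≤
      ENNReal.ofReal |π / c| *
        ((∫⁻ x, ‖f' x‖ₑ) * (∫⁻ x, ‖g x‖ₑ) + (∫⁻ x, ‖f x‖ₑ) * ∫⁻ x, ‖g' x‖ₑ) := by
  have hf_shift := hf.integrable.comp_sub_right (-(π / c))
  have hf_diff := (hf.integrable.sub hf_shift).aestronglyMeasurable.enorm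
  have hg_shift := hg.integrable.comp_sub_right (π / c)
  have hg_diff := (hg.integrable.sub hg_shift).aestronglyMeasurable.enorm
  have hleft := aemeasurable_comp_sub_mul hf_diff hg.integrable.aestronglyMeasurable.enorm
  have hright := aemeasurable_comp_sub_mul hf_shift.aestronglyMeasurable.enorm hg_diff
  simp only [Pi.sub_apply] at hleft hright hf_diff hg_diff
  calc 2 * ∫⁻ ξ, ‖oscConv c f g ξ‖ₑ
      ≤ ∫⁻ ξ, ∫⁻ ζ, (‖f (ξ - ζ) - f (ξ - ζ - -(π / c))‖ₑ * ‖g ζ‖ₑ +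
          ‖f (ξ - ζ - -(π / c))‖ₑ * ‖g ζ - g (ζ - π / c)‖ₑ) := by
        rw [← lintegral_const_mul' _ _ ENNReal.ofNat_ne_top]
        exact lintegral_mono fun ξ => enorm_oscConv_le_lintegral_sub hc f g ξ
    _ = (∫⁻ x, ‖f x - f (x - -(π / c))‖ₑ) * (∫⁻ x, ‖g x‖ₑ) +
          (∫⁻ x, ‖f (x - -(π / c))‖ₑ) * ∫⁻ x, ‖g x - g (x - π / c)‖ₑ := by
        rw [lintegral_lintegral (hleft.add hright), lintegral_add_left' hleft,
          lintegral_prod _ hleft, lintegral_prod _ hright,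
          lintegral_lintegral_sub_mul hf_diff hg.integrable.aestronglyMeasurable.enorm,
          lintegral_lintegral_sub_mul hf_shift.aestronglyMeasurable.enorm hg_diff]
    _ ≤ ((∫⁻ x, ‖f' x‖ₑ) * ENNReal.ofReal |π / c|) * (∫⁻ x, ‖g x‖ₑ) +
          (∫⁻ x, ‖f x‖ₑ) * ((∫⁻ x, ‖g' x‖ₑ) * ENNReal.ofReal |π / c|) := by
        rw [lintegral_sub_right_eq_self fun x => ‖f x‖ₑ, ← abs_neg (π / c)]
        gcongr
        · exact hf.lintegral_enorm_sub_translate_le _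
        · rw [abs_neg]
          exact hg.lintegral_enorm_sub_translate_le _
    _ = _ := by ring

/-- The undamped cubic term `∫∫ e^{icζ} f₁(k - ξ) f₂(ξ - ζ) f₃(ζ) dζ dξ` at a fixed time, as the
convolution of `f₁` with the oscillatory convolution of `f₂` and `f₃`. -/
def cubicTerm (c : ℝ) (f₁ f₂ f₃ : ℝ → ℂ) (k : ℝ) : ℂ :=
  ∫ ξ, f₁ (k - ξ) * oscConv c f₂ f₃ ξ

lemma integral_expc_mul_eq_exp_mul_cubicTerm (x b s : ℝ) (f₁ f₂ f₃ : ℝ → ℂ) (k : ℝ) :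
    ∫ ξ, ∫ ζ, expc x (b * ζ * s) * (f₁ (k - ξ) * f₂ (ξ - ζ) * f₃ ζ) =
      Real.exp x * cubicTerm (b * s) f₁ f₂ f₃ k := by
  simp only [cubicTerm, oscConv, ← integral_const_mul]
  congr! 4
  rw [expc_eq_exp_mul, mul_right_comm b]
  ring

lemma measurable_oscConv (b : ℝ) {w₂ w₃ : ℝ → ℝ → ℂ} (h₂ : Measurable (Function.uncurry w₂))
    (h₃ : Measurable (Function.uncurry w₃)) :
    Measurable fun p : ℝ × ℝ => oscConv (b * p.1) (w₂ p.1) (w₃ p.1) p.2 := by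
  refine (StronglyMeasurable.integral_prod_right' (Measurable.stronglyMeasurable
    (f := fun q : (ℝ × ℝ) × ℝ => expc 0 (b * q.1.1 * q.2) *
      (w₂ q.1.1 (q.1.2 - q.2) * w₃ q.1.1 q.2)) ?_)).measurable
  fun_prop

lemma measurable_cubicTerm (b : ℝ) {w₁ w₂ w₃ : ℝ → ℝ → ℂ}
    (h₁ : Measurable (Function.uncurry w₁)) (h₂ : Measurable (Function.uncurry w₂))
    (h₃ : Measurable (Function.uncurry w₃)) :
    Measurable fun p : ℝ × ℝ => cubicTerm (b * p.1) (w₁ p.1) (w₂ p.1) (w₃ p.1) p.2 := by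
  have hosc := (measurable_oscConv b h₂ h₃).comp
    (f := fun q : (ℝ × ℝ) × ℝ => (q.1.1, q.2)) (by fun_prop)
  refine (StronglyMeasurable.integral_prod_right' (Measurable.stronglyMeasurable
    (f := fun q : (ℝ × ℝ) × ℝ => w₁ q.1.1 (q.1.2 - q.2) *
      oscConv (b * q.1.1) (w₂ q.1.1) (w₃ q.1.1) q.2) ?_)).measurable
  exact Measurable.mul (by fun_prop) hosc

lemma lintegral_enorm_cubicTerm_le (c : ℝ) {f₁ f₂ f₃ : ℝ → ℂ} (h₁ : AEStronglyMeasurable f₁)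
    (hosc : AEStronglyMeasurable (oscConv c f₂ f₃)) :
    ∫⁻ k, ‖cubicTerm c f₁ f₂ f₃ k‖ₑ ≤ (∫⁻ x, ‖f₁ x‖ₑ) * ∫⁻ ξ, ‖oscConv c f₂ f₃ ξ‖ₑ := by
  rw [← lintegral_lintegral_sub_mul h₁.enorm hosc.enorm]
  refine lintegral_mono fun k => (enorm_integral_le_lintegral_enorm _).trans_eq ?_
  simp only [enorm_mul]

lemma MemW11.enorm_cubicTerm_le (c : ℝ) {f₁ f₁' : ℝ → ℂ} (h₁ : MemW11 f₁ f₁') (f₂ f₃ : ℝ → ℂ)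
    (k : ℝ) :
    ‖cubicTerm c f₁ f₂ f₃ k‖ₑ ≤ (∫⁻ x, ‖f₁' x‖ₑ) * ∫⁻ ξ, ‖oscConv c f₂ f₃ ξ‖ₑ := by
  have hf₁ : ∀ᵐ ξ, ‖f₁ (k - ξ)‖ₑ ≤ ∫⁻ x, ‖f₁' x‖ₑ :=
    (quasiMeasurePreserving_sub_left_of_right_invariant volume k).ae h₁.ae_enorm_le
  calc ‖cubicTerm c f₁ f₂ f₃ k‖ₑ ≤ ∫⁻ ξ, ‖f₁ (k - ξ) * oscConv c f₂ f₃ ξ‖ₑ :=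
        enorm_integral_le_lintegral_enorm _
    _ ≤ ∫⁻ ξ, (∫⁻ x, ‖f₁' x‖ₑ) * ‖oscConv c f₂ f₃ ξ‖ₑ := by
        refine lintegral_mono_ae ?_
        filter_upwards [hf₁] with ξ hξ
        rw [enorm_mul]
        gcongr
    _ = (∫⁻ x, ‖f₁' x‖ₑ) * ∫⁻ ξ, ‖oscConv c f₂ f₃ ξ‖ₑ :=
        lintegral_const_mul' _ _ h₁.integrable_deriv.2.ne

/-- `v` lies in `W^{1,1}(ℝ, ℂ)` with weak derivative `v'`, `‖v‖_{L¹} ≤ p` and `‖v'‖_{L¹} ≤ q`. -/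
structure MemW11Ball (v v' : ℝ → ℂ) (p q : ℝ) : Prop extends MemW11 v v' where
  integral_norm_le : ∫ x, ‖v x‖ ≤ p
  integral_norm_deriv_le : ∫ x, ‖v' x‖ ≤ q

namespace MemW11Ball

variable {f f' g g' : ℝ → ℂ} {p q p₁ q₁ p₂ q₂ : ℝ}

lemma nonneg (h : MemW11Ball f f' p q) : 0 ≤ p :=
  (integral_nonneg fun _ => norm_nonneg _).trans h.integral_norm_le

lemma deriv_nonneg (h : MemW11Ball f f' p q) : 0 ≤ q :=
  (integral_nonneg fun _ => norm_nonneg _).trans h.integral_norm_deriv_le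

lemma lintegral_enorm_le (h : MemW11Ball f f' p q) : ∫⁻ x, ‖f x‖ₑ ≤ ENNReal.ofReal p := by
  rw [← ofReal_integral_norm_eq_lintegral_enorm h.integrable]
  exact ENNReal.ofReal_le_ofReal h.integral_norm_le

lemma lintegral_enorm_deriv_le (h : MemW11Ball f f' p q) :
    ∫⁻ x, ‖f' x‖ₑ ≤ ENNReal.ofReal q := by
  rw [← ofReal_integral_norm_eq_lintegral_enorm h.integrable_deriv]
  exact ENNReal.ofReal_le_ofReal h.integral_norm_deriv_le

lemma lintegral_enorm_oscConv_le (c : ℝ) (hf : MemW11Ball f f' p₁ q₁)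
    (hg : MemW11Ball g g' p₂ q₂) :
    ∫⁻ ξ, ‖oscConv c f g ξ‖ₑ ≤ ENNReal.ofReal (p₁ * p₂) := by
  rw [ENNReal.ofReal_mul hf.nonneg]
  refine (_root_.lintegral_enorm_oscConv_le c hf.integrable.aestronglyMeasurable
    hg.integrable.aestronglyMeasurable).trans ?_
  gcongr
  exacts [hf.lintegral_enorm_le, hg.lintegral_enorm_le]

lemma abs_mul_lintegral_enorm_oscConv_le (c : ℝ) (hf : MemW11Ball f f' p₁ q₁)
    (hg : MemW11Ball g g' p₂ q₂) :
    ENNReal.ofReal (2 * |c|) * ∫⁻ ξ, ‖oscConv c f g ξ‖ₑ ≤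
      ENNReal.ofReal (π * (q₁ * p₂ + p₁ * q₂)) := by
  have hp₁ := hf.nonneg
  have hq₁ := hf.deriv_nonneg
  have hp₂ := hg.nonneg
  have hq₂ := hg.deriv_nonneg
  rcases eq_or_ne c 0 with rfl | hc
  · simp
  calc ENNReal.ofReal (2 * |c|) * ∫⁻ ξ, ‖oscConv c f g ξ‖ₑ
      = ENNReal.ofReal |c| * (2 * ∫⁻ ξ, ‖oscConv c f g ξ‖ₑ) := by
        rw [ENNReal.ofReal_mul zero_le_two, ENNReal.ofReal_ofNat]
        ring
    _ ≤ ENNReal.ofReal |c| * (ENNReal.ofReal |π / c| *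
          (ENNReal.ofReal q₁ * ENNReal.ofReal p₂ + ENNReal.ofReal p₁ * ENNReal.ofReal q₂)) := by
        refine mul_le_mul_right ((hf.toMemW11.lintegral_enorm_oscConv_le hc hg.toMemW11).trans ?_) _
        gcongr
        exacts [hf.lintegral_enorm_deriv_le, hg.lintegral_enorm_le, hf.lintegral_enorm_le,
          hg.lintegral_enorm_deriv_le]
    _ = ENNReal.ofReal (π * (q₁ * p₂ + p₁ * q₂)) := by
        rw [← ENNReal.ofReal_mul hq₁, ← ENNReal.ofReal_mul hp₁,
          ← ENNReal.ofReal_add (by positivity) (by positivity), ← mul_assoc,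
          ← ENNReal.ofReal_mul (abs_nonneg c), ← abs_mul, mul_div_cancel₀ _ hc,
          abs_of_pos pi_pos, ← ENNReal.ofReal_mul pi_pos.le]

end MemW11Ball

/-- The Fourier symbol of `|∂|^a e^{β∂²}`; the Duhamel term carries it with `β = d(t - s)`. -/
def heatWeight (a β k : ℝ) : ℝ := |k| ^ a * Real.exp (-(β * k ^ 2))

lemma heatWeight_le {a β : ℝ} (ha : 0 ≤ a) (hβ : 0 < β) (k : ℝ) :
    heatWeight a β k ≤ (a / β) ^ (a / 2) * Real.exp (-(β / 2) * k ^ 2) := by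
  rcases ha.eq_or_lt with rfl | ha
  · simp only [heatWeight, rpow_zero, zero_div, one_mul, Real.exp_le_exp]
    nlinarith [sq_nonneg k]
  have hpow : |k| ^ a = (a / β) ^ (a / 2) * (β * k ^ 2 / a) ^ (a / 2) := by
    rw [← mul_rpow (by positivity) (by positivity),
      show a / β * (β * k ^ 2 / a) = |k| ^ (2 : ℝ) by rw [rpow_two, sq_abs]; field_simp,
      ← rpow_mul (abs_nonneg k), mul_div_cancel₀ a two_ne_zero]
  have hexp : (β * k ^ 2 / a) ^ (a / 2) ≤ Real.exp (β / 2 * k ^ 2) := by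
    calc (β * k ^ 2 / a) ^ (a / 2) ≤ Real.exp (β * k ^ 2 / a) ^ (a / 2) := by
          gcongr
          linarith [add_one_le_exp (β * k ^ 2 / a)]
      _ = Real.exp (β / 2 * k ^ 2) := by
          rw [← Real.exp_mul]
          congr 1
          field_simp
  calc heatWeight a β k
      ≤ (a / β) ^ (a / 2) * Real.exp (β / 2 * k ^ 2) * Real.exp (-(β * k ^ 2)) := by
        rw [heatWeight, hpow]
        gcongr
    _ = (a / β) ^ (a / 2) * Real.exp (-(β / 2) * k ^ 2) := by
        rw [mul_assoc, ← Real.exp_add]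
        ring_nf

lemma lintegral_heatWeight_mul_le {a β : ℝ} (ha : 0 ≤ a) (hβ : 0 < β) (F : ℝ → ℝ≥0∞) :
    ∫⁻ k, ENNReal.ofReal (heatWeight a β k) * F k ≤
      ENNReal.ofReal ((a / β) ^ (a / 2)) * ∫⁻ k, F k := by
  rw [← lintegral_const_mul' _ _ ENNReal.ofReal_ne_top]
  gcongr with k
  refine (heatWeight_le ha hβ k).trans
    (mul_le_of_le_one_right (by positivity) (Real.exp_le_one_iff.2 ?_))
  nlinarith [sq_nonneg k]

lemma lintegral_heatWeight_mul_le_of_le {a β : ℝ} (ha : 0 ≤ a) (hβ : 0 < β) {F : ℝ → ℝ≥0∞}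
    {M : ℝ≥0∞} (hF : ∀ k, F k ≤ M) :
    ∫⁻ k, ENNReal.ofReal (heatWeight a β k) * F k ≤
      ENNReal.ofReal ((a / β) ^ (a / 2) * √(2 * π / β)) * M := by
  have hint : Integrable fun k => (a / β) ^ (a / 2) * Real.exp (-(β / 2) * k ^ 2) :=
    (integrable_exp_neg_mul_sq (half_pos hβ)).const_mul _
  calc ∫⁻ k, ENNReal.ofReal (heatWeight a β k) * F k
      ≤ ∫⁻ k, ENNReal.ofReal ((a / β) ^ (a / 2) * Real.exp (-(β / 2) * k ^ 2)) * M := by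
        exact lintegral_mono fun k => mul_le_mul'
          (ENNReal.ofReal_le_ofReal (heatWeight_le ha hβ k)) (hF k)
    _ = ENNReal.ofReal (∫ k, (a / β) ^ (a / 2) * Real.exp (-(β / 2) * k ^ 2)) * M := by
        rw [lintegral_mul_const'' _ hint.aemeasurable.ennreal_ofReal,
          ofReal_integral_eq_lintegral_ofReal hint (Eventually.of_forall fun k => by positivity)]
    _ = ENNReal.ofReal ((a / β) ^ (a / 2) * √(2 * π / β)) * M := by
        rw [integral_const_mul, integral_gaussian]
        congr 4
        field_simp

lemma div_mul_rpow_half_le {a d τ : ℝ} (ha : 0 ≤ a) (ha_le : a ≤ 2) (hd : 0 < d) (hτ : 0 < τ) :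
    (a / (d * τ)) ^ (a / 2) ≤ (1 + 2 / d) * τ ^ (-a / 2) := by
  rw [← div_div, div_rpow (by positivity) hτ.le, div_eq_mul_inv, ← rpow_neg hτ.le, neg_div]
  gcongr
  calc (a / d) ^ (a / 2) ≤ (1 + 2 / d) ^ (a / 2) := by
        gcongr
        linarith [div_le_div_of_nonneg_right ha_le hd.le]
    _ ≤ 1 + 2 / d :=
        rpow_le_self_of_one_le (by linarith [div_nonneg zero_le_two hd.le]) (by linarith)

lemma div_mul_rpow_half_mul_sqrt_le {a d τ : ℝ} (ha : 0 ≤ a) (ha_le : a ≤ 2) (hd : 0 < d)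
    (hτ : 0 < τ) :
    (a / (d * τ)) ^ (a / 2) * √(2 * π / (d * τ)) ≤
      (1 + 2 / d) * √(2 * π / d) * τ ^ (-(1 + a) / 2) := by
  have hpow : τ ^ (-(1 + a) / 2) = τ ^ (-a / 2) / √τ := by
    rw [show -(1 + a) / 2 = -a / 2 - 1 / 2 by ring, rpow_sub hτ, sqrt_eq_rpow]
  calc (a / (d * τ)) ^ (a / 2) * √(2 * π / (d * τ))
      ≤ (1 + 2 / d) * τ ^ (-a / 2) * √(2 * π / (d * τ)) := by
        gcongr
        exact div_mul_rpow_half_le ha ha_le hd hτ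
    _ = (1 + 2 / d) * √(2 * π / d) * τ ^ (-(1 + a) / 2) := by
        rw [hpow, ← div_div, sqrt_div' _ hτ.le]
        ring

section TimeDecay

variable {b s η₁ η₂ η₃ : ℝ} {f₁ f₁' f₂ f₂' f₃ f₃' : ℝ → ℂ}

lemma lintegral_enorm_oscConv_decay (hb : b ≠ 0) (hs : 0 ≤ s)
    (h₂ : MemW11Ball f₂ f₂' (η₂ * (1 + s) ^ (-(1 : ℝ) / 2)) η₂)
    (h₃ : MemW11Ball f₃ f₃' (η₃ * (1 + s) ^ (-(1 : ℝ) / 2)) η₃) :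
    ∫⁻ ξ, ‖oscConv (b * s) f₂ f₃ ξ‖ₑ ≤
      ENNReal.ofReal ((1 + π / |b|) * (η₂ * η₃) * (1 + s) ^ (-(3 : ℝ) / 2)) := by
  have hσ : 0 < 1 + s := by linarith
  have hη₂ := h₂.deriv_nonneg
  have hη₃ := h₃.deriv_nonneg
  set N := ∫⁻ ξ, ‖oscConv (b * s) f₂ f₃ ξ‖ₑ
  set p := (1 + s) ^ (-(1 : ℝ) / 2) with hp_def
  have hp_one : p ≤ 1 := rpow_le_one_of_one_le_of_nonpos (by linarith) (by norm_num)
  have hscale : (1 + s) ^ (-(3 : ℝ) / 2) = p / (1 + s) := by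
    rw [hp_def, ← rpow_sub_one hσ.ne']
    norm_num
  rw [hscale, ← mul_div_assoc, ENNReal.ofReal_div_of_pos hσ,
    ENNReal.le_div_iff_mul_le (by simp [hσ]) (by simp), mul_comm]
  calc ENNReal.ofReal (1 + s) * N
      = N + ENNReal.ofReal (1 / (2 * |b|)) * (ENNReal.ofReal (2 * |b * s|) * N) := by
        rw [ENNReal.ofReal_add zero_le_one hs, ← mul_assoc,
          ← ENNReal.ofReal_mul (by positivity), abs_mul, abs_of_nonneg hs, ENNReal.ofReal_one,
          add_mul, one_mul]
        congr 3
        field_simp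
    _ ≤ ENNReal.ofReal (η₂ * p * (η₃ * p)) + ENNReal.ofReal (1 / (2 * |b|)) *
          ENNReal.ofReal (π * (η₂ * (η₃ * p) + η₂ * p * η₃)) := by
        gcongr
        exacts [h₂.lintegral_enorm_oscConv_le _ h₃, h₂.abs_mul_lintegral_enorm_oscConv_le _ h₃]
    _ = ENNReal.ofReal ((p + π / |b|) * (η₂ * η₃) * p) := by
        rw [← ENNReal.ofReal_mul (by positivity), ← ENNReal.ofReal_add (by positivity)
          (by positivity)]
        congr 1
        field_simp
        ring
    _ ≤ ENNReal.ofReal ((1 + π / |b|) * (η₂ * η₃) * p) := by gcongr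

variable (h₁ : MemW11Ball f₁ f₁' (η₁ * (1 + s) ^ (-(1 : ℝ) / 2)) η₁)
  (h₂ : MemW11Ball f₂ f₂' (η₂ * (1 + s) ^ (-(1 : ℝ) / 2)) η₂)
  (h₃ : MemW11Ball f₃ f₃' (η₃ * (1 + s) ^ (-(1 : ℝ) / 2)) η₃)

include h₁ h₂ h₃

lemma lintegral_enorm_cubicTerm_decay (hb : b ≠ 0) (hs : 0 ≤ s) :
    ∫⁻ k, ‖cubicTerm (b * s) f₁ f₂ f₃ k‖ₑ ≤
      ENNReal.ofReal ((1 + π / |b|) * (η₁ * η₂ * η₃) * (1 + s) ^ (-2 : ℝ)) := by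
  have hpow : (1 + s) ^ (-2 : ℝ) = (1 + s) ^ (-(1 : ℝ) / 2) * (1 + s) ^ (-(3 : ℝ) / 2) := by
    rw [← rpow_add (by linarith)]
    norm_num
  have hsplit : (1 + π / |b|) * (η₁ * η₂ * η₃) * (1 + s) ^ (-2 : ℝ) =
      η₁ * (1 + s) ^ (-(1 : ℝ) / 2) *
        ((1 + π / |b|) * (η₂ * η₃) * (1 + s) ^ (-(3 : ℝ) / 2)) := by
    rw [hpow]
    ring
  rw [hsplit, ENNReal.ofReal_mul h₁.nonneg]
  refine (lintegral_enorm_cubicTerm_le _ h₁.integrable.aestronglyMeasurable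
    (aestronglyMeasurable_oscConv _ h₂.integrable.aestronglyMeasurable
      h₃.integrable.aestronglyMeasurable)).trans ?_
  gcongr
  exacts [h₁.lintegral_enorm_le, lintegral_enorm_oscConv_decay hb hs h₂ h₃]

lemma enorm_cubicTerm_decay (hb : b ≠ 0) (hs : 0 ≤ s) (k : ℝ) :
    ‖cubicTerm (b * s) f₁ f₂ f₃ k‖ₑ ≤
      ENNReal.ofReal ((1 + π / |b|) * (η₁ * η₂ * η₃) * (1 + s) ^ (-(3 : ℝ) / 2)) := by
  have hsplit : (1 + π / |b|) * (η₁ * η₂ * η₃) * (1 + s) ^ (-(3 : ℝ) / 2) =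
      η₁ * ((1 + π / |b|) * (η₂ * η₃) * (1 + s) ^ (-(3 : ℝ) / 2)) := by
    ring
  rw [hsplit, ENNReal.ofReal_mul h₁.deriv_nonneg]
  refine (h₁.enorm_cubicTerm_le _ _ _ k).trans ?_
  gcongr
  exacts [h₁.lintegral_enorm_deriv_le, lintegral_enorm_oscConv_decay hb hs h₂ h₃]

lemma lintegral_heatWeight_mul_cubicTerm_le_of_lintegral {d τ a : ℝ} (hd : 0 < d) (hb : b ≠ 0)
    (hs : 0 ≤ s) (hτ : 0 < τ) (ha : 0 ≤ a) (ha_le : a ≤ 2) :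
    ∫⁻ k, ENNReal.ofReal (heatWeight a (d * τ) k) * ‖cubicTerm (b * s) f₁ f₂ f₃ k‖ₑ ≤
      ENNReal.ofReal ((1 + 2 / d) * (1 + π / |b|) * (η₁ * η₂ * η₃) *
        (τ ^ (-a / 2) * (1 + s) ^ (-2 : ℝ))) := by
  have hη₁ := h₁.deriv_nonneg
  have hη₂ := h₂.deriv_nonneg
  have hη₃ := h₃.deriv_nonneg
  refine (lintegral_heatWeight_mul_le ha (by positivity) _).trans
    ((mul_le_mul_right (lintegral_enorm_cubicTerm_decay h₁ h₂ h₃ hb hs) _).trans ?_)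
  rw [← ENNReal.ofReal_mul (by positivity)]
  refine ENNReal.ofReal_le_ofReal ((mul_le_mul_of_nonneg_right
    (div_mul_rpow_half_le ha ha_le hd hτ) (by positivity)).trans_eq (by ring))

lemma lintegral_heatWeight_mul_cubicTerm_le_of_sup {d τ a : ℝ} (hd : 0 < d) (hb : b ≠ 0)
    (hs : 0 ≤ s) (hτ : 0 < τ) (ha : 0 ≤ a) (ha_le : a ≤ 2) :
    ∫⁻ k, ENNReal.ofReal (heatWeight a (d * τ) k) * ‖cubicTerm (b * s) f₁ f₂ f₃ k‖ₑ ≤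
      ENNReal.ofReal ((1 + 2 / d) * √(2 * π / d) * (1 + π / |b|) * (η₁ * η₂ * η₃) *
        (τ ^ (-(1 + a) / 2) * (1 + s) ^ (-(3 : ℝ) / 2))) := by
  have hη₁ := h₁.deriv_nonneg
  have hη₂ := h₂.deriv_nonneg
  have hη₃ := h₃.deriv_nonneg
  refine (lintegral_heatWeight_mul_le_of_le ha (by positivity)
    (enorm_cubicTerm_decay h₁ h₂ h₃ hb hs)).trans ?_
  rw [← ENNReal.ofReal_mul (by positivity)]
  refine ENNReal.ofReal_le_ofReal ((mul_le_mul_of_nonneg_right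
    (div_mul_rpow_half_mul_sqrt_le ha ha_le hd hτ) (by positivity)).trans_eq (by ring))

lemma lintegral_heatWeight_mul_cubicTerm_le {d τ a : ℝ} (hd : 0 < d) (hb : b ≠ 0)
    (hs : 0 ≤ s) (hτ : 0 < τ) (ha : 0 ≤ a) (ha_le : a ≤ 2) :
    ∫⁻ k, ENNReal.ofReal (heatWeight a (d * τ) k) * ‖cubicTerm (b * s) f₁ f₂ f₃ k‖ₑ ≤
      ENNReal.ofReal ((1 + 2 / d) * (1 + √(2 * π / d)) * (1 + π / |b|) * (η₁ * η₂ * η₃)) *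
        ENNReal.ofReal (min (τ ^ (-a / 2) * (1 + s) ^ (-2 : ℝ))
          (τ ^ (-(1 + a) / 2) * (1 + s) ^ (-(3 : ℝ) / 2))) := by
  have hη₁ := h₁.deriv_nonneg
  have hη₂ := h₂.deriv_nonneg
  have hη₃ := h₃.deriv_nonneg
  rw [← ENNReal.ofReal_mul (by positivity), mul_min_of_nonneg _ _ (by positivity),
    ENNReal.ofReal_min]
  refine le_min ((lintegral_heatWeight_mul_cubicTerm_le_of_lintegral h₁ h₂ h₃ hd hb hs hτ ha
    ha_le).trans ?_) ((lintegral_heatWeight_mul_cubicTerm_le_of_sup h₁ h₂ h₃ hd hb hs hτ ha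
    ha_le).trans ?_)
  · gcongr
    exact le_mul_of_one_le_right (by positivity) (le_add_of_nonneg_right (sqrt_nonneg _))
  · gcongr
    exact le_add_of_nonneg_left zero_le_one

end TimeDecay

lemma lintegral_Ioo_ofReal_eq {g : ℝ → ℝ} {t : ℝ} (ht : 0 ≤ t)
    (hg : IntervalIntegrable g volume 0 t) (hg_nonneg : ∀ s ∈ Ioo 0 t, 0 ≤ g s) :
    ∫⁻ s in Ioo 0 t, ENNReal.ofReal (g s) = ENNReal.ofReal (∫ s in 0..t, g s) := by
  rw [intervalIntegral.integral_of_le ht, integral_Ioc_eq_integral_Ioo,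
    ofReal_integral_eq_lintegral_ofReal
      ((intervalIntegrable_iff_integrableOn_Ioo_of_le ht).1 hg)
      (ae_restrict_of_forall_mem measurableSet_Ioo hg_nonneg)]

lemma lintegral_one_add_rpow_le {t r : ℝ} (ht : 0 ≤ t) (hr : r < -1) :
    ∫⁻ s in Ioo 0 t, ENNReal.ofReal ((1 + s) ^ r) ≤ ENNReal.ofReal (-1 / (r + 1)) := by
  have hzero : (0 : ℝ) ∉ [[1 + 0, 1 + t]] := by
    rw [uIcc_of_le (by linarith)]
    exact fun h => by linarith [h.1]
  have hint : IntervalIntegrable (fun s => (1 + s) ^ r) volume 0 t := by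
    simpa using (intervalIntegral.intervalIntegrable_rpow (μ := volume) (r := r)
      (Or.inr hzero)).comp_add_left 1
  rw [lintegral_Ioo_ofReal_eq ht hint fun s hs => rpow_nonneg (by linarith [hs.1]) r,
    intervalIntegral.integral_comp_add_left (fun x => x ^ r), integral_rpow
      (Or.inr ⟨hr.ne, hzero⟩), add_zero, one_rpow]
  refine ENNReal.ofReal_le_ofReal (div_le_div_of_nonpos_of_le (by linarith) ?_)
  linarith [rpow_nonneg (show 0 ≤ 1 + t by linarith) (r + 1)]

lemma lintegral_sub_rpow {t r : ℝ} (ht : 0 ≤ t) (hr : -1 < r) :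
    ∫⁻ s in Ioo 0 t, ENNReal.ofReal ((t - s) ^ r) = ENNReal.ofReal (t ^ (r + 1) / (r + 1)) := by
  have hint : IntervalIntegrable (fun s => (t - s) ^ r) volume 0 t := by
    simpa using (intervalIntegral.intervalIntegrable_rpow' (a := t) (b := 0) hr).comp_sub_left t
  rw [lintegral_Ioo_ofReal_eq ht hint fun s hs => rpow_nonneg (by linarith [hs.2]) r,
    intervalIntegral.integral_comp_sub_left (fun x => x ^ r), integral_rpow (Or.inl hr)]
  simp [zero_rpow (show r + 1 ≠ 0 by linarith)]

lemma half_rpow_le_four_mul {x r : ℝ} (hx : 0 ≤ x) (hr : -2 ≤ r) :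
    (x / 2) ^ r ≤ 4 * x ^ r := by
  have htwo : (2 : ℝ) ^ (-r) ≤ 4 := by
    calc (2 : ℝ) ^ (-r) ≤ 2 ^ (2 : ℝ) := rpow_le_rpow_of_exponent_le one_le_two (by linarith)
      _ = 4 := by norm_num
  rw [div_rpow hx zero_le_two, div_eq_mul_inv, ← rpow_neg zero_le_two, mul_comm]
  gcongr

-- Either `t - s` or `1 + s` is at least `(1 + t) / 2`.
lemma min_kernel_le {s t a : ℝ} (hs : 0 ≤ s) (hst : s < t) (ha : 0 ≤ a) (ha_le : a ≤ 3) :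
    min ((t - s) ^ (-a / 2) * (1 + s) ^ (-2 : ℝ))
        ((t - s) ^ (-(1 + a) / 2) * (1 + s) ^ (-(3 : ℝ) / 2)) ≤
      4 * ((1 + t) ^ (-(1 + a) / 2) * (1 + s) ^ (-(3 : ℝ) / 2) +
        (1 + t) ^ (-2 : ℝ) * (t - s) ^ (-a / 2)) := by
  have ht : 0 < 1 + t := by linarith
  have hleft : 0 ≤ (1 + t) ^ (-(1 + a) / 2) * (1 + s) ^ (-(3 : ℝ) / 2) := by positivity
  have hright : 0 ≤ (1 + t) ^ (-2 : ℝ) * (t - s) ^ (-a / 2) := by positivity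
  rcases le_total ((1 + t) / 2) (t - s) with hτ_large | hτ_small
  · have hpow : (t - s) ^ (-(1 + a) / 2) ≤ 4 * (1 + t) ^ (-(1 + a) / 2) :=
      (rpow_le_rpow_of_nonpos (by linarith) hτ_large (by linarith)).trans
        (half_rpow_le_four_mul ht.le (by linarith))
    calc _ ≤ (t - s) ^ (-(1 + a) / 2) * (1 + s) ^ (-(3 : ℝ) / 2) := min_le_right _ _
      _ ≤ 4 * (1 + t) ^ (-(1 + a) / 2) * (1 + s) ^ (-(3 : ℝ) / 2) := by gcongr
      _ ≤ _ := by linarith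
  · have hpow : (1 + s) ^ (-2 : ℝ) ≤ 4 * (1 + t) ^ (-2 : ℝ) :=
      (rpow_le_rpow_of_nonpos (by linarith) (by linarith : (1 + t) / 2 ≤ 1 + s)
        (by norm_num)).trans (half_rpow_le_four_mul ht.le le_rfl)
    calc _ ≤ (t - s) ^ (-a / 2) * (1 + s) ^ (-2 : ℝ) := min_le_left _ _
      _ ≤ (t - s) ^ (-a / 2) * (4 * (1 + t) ^ (-2 : ℝ)) := by gcongr
      _ ≤ _ := by linarith

lemma rpow_neg_two_mul_rpow_div_le {t a : ℝ} (ht : 0 ≤ t) (ha : a < 2) :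
    (1 + t) ^ (-2 : ℝ) * (t ^ (-a / 2 + 1) / (-a / 2 + 1)) ≤
      2 / (2 - a) * (1 + t) ^ (-(1 + a) / 2) := by
  have hT : 0 < 1 + t := by linarith
  have hden : (-a / 2 + 1)⁻¹ = 2 / (2 - a) := by
    rw [show -a / 2 + 1 = (2 - a) / 2 by ring, inv_div]
  calc (1 + t) ^ (-2 : ℝ) * (t ^ (-a / 2 + 1) / (-a / 2 + 1))
      ≤ (1 + t) ^ (-2 : ℝ) * ((1 + t) ^ (-a / 2 + 1) / (-a / 2 + 1)) := by
        gcongr <;> linarith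
    _ = 2 / (2 - a) * (1 + t) ^ (-2 + (-a / 2 + 1)) := by
        rw [rpow_add hT (-2), div_eq_mul_inv _ (-a / 2 + 1), hden]
        ring
    _ ≤ 2 / (2 - a) * (1 + t) ^ (-(1 + a) / 2) := by
        gcongr <;> linarith

lemma lintegral_min_kernel_le {t a : ℝ} (ht : 0 ≤ t) (ha : 0 ≤ a) (ha_lt : a < 2) :
    ∫⁻ s in Ioo 0 t, ENNReal.ofReal (min ((t - s) ^ (-a / 2) * (1 + s) ^ (-2 : ℝ))
        ((t - s) ^ (-(1 + a) / 2) * (1 + s) ^ (-(3 : ℝ) / 2))) ≤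
      ENNReal.ofReal (8 * (1 + 1 / (2 - a)) * (1 + t) ^ (-(1 + a) / 2)) := by
  have hsub := rpow_neg_two_mul_rpow_div_le ht ha_lt
  calc _ ≤ ∫⁻ s in Ioo 0 t, (ENNReal.ofReal (4 * (1 + t) ^ (-(1 + a) / 2)) *
            ENNReal.ofReal ((1 + s) ^ (-(3 : ℝ) / 2)) +
          ENNReal.ofReal (4 * (1 + t) ^ (-2 : ℝ)) * ENNReal.ofReal ((t - s) ^ (-a / 2))) := by
        refine setLIntegral_mono' measurableSet_Ioo fun s hs => ?_
        have hσ : 0 < 1 + s := by linarith [hs.1]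
        have hτ : 0 < t - s := sub_pos.2 hs.2
        rw [← ENNReal.ofReal_mul (by positivity), ← ENNReal.ofReal_mul (by positivity),
          ← ENNReal.ofReal_add (by positivity) (by positivity)]
        refine ENNReal.ofReal_le_ofReal
          ((min_kernel_le hs.1.le hs.2 ha (by linarith)).trans_eq (by ring))
    _ ≤ ENNReal.ofReal (4 * (1 + t) ^ (-(1 + a) / 2)) * ENNReal.ofReal (-1 / (-3 / 2 + 1)) +
          ENNReal.ofReal (4 * (1 + t) ^ (-2 : ℝ)) *
            ENNReal.ofReal (t ^ (-a / 2 + 1) / (-a / 2 + 1)) := by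
        rw [lintegral_add_left (by fun_prop), lintegral_const_mul _ (by fun_prop),
          lintegral_const_mul _ (by fun_prop), lintegral_sub_rpow ht (by linarith)]
        gcongr
        exact lintegral_one_add_rpow_le ht (by norm_num)
    _ ≤ ENNReal.ofReal (8 * (1 + 1 / (2 - a)) * (1 + t) ^ (-(1 + a) / 2)) := by
        rw [← ENNReal.ofReal_mul (by positivity), ← ENNReal.ofReal_mul (by positivity),
          ← ENNReal.ofReal_add (by positivity) (mul_nonneg (by positivity)
            (div_nonneg (rpow_nonneg ht _) (by linarith)))]
        refine ENNReal.ofReal_le_ofReal ?_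
        linear_combination 4 * hsub

lemma ofReal_integral_le_lintegral_ofReal {α : Type*} [MeasurableSpace α] {μ : Measure α}
    {f : α → ℝ} (hf : ∀ x, 0 ≤ f x) :
    ENNReal.ofReal (∫ x, f x ∂μ) ≤ ∫⁻ x, ENNReal.ofReal (f x) ∂μ := by
  rw [← Real.enorm_of_nonneg (integral_nonneg hf)]
  simpa only [Real.enorm_of_nonneg (hf _)] using enorm_integral_le_lintegral_enorm f

lemma lintegral_duhamel_le (d b a : ℝ) {t : ℝ} (ht : 0 ≤ t) {w₁ w₂ w₃ : ℝ → ℝ → ℂ}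
    (h₁ : Measurable (Function.uncurry w₁)) (h₂ : Measurable (Function.uncurry w₂))
    (h₃ : Measurable (Function.uncurry w₃)) :
    ∫⁻ k, ENNReal.ofReal (|k| ^ a *
        ‖∫ s in (0 : ℝ)..t, ∫ ξ : ℝ, ∫ ζ : ℝ, expc (-(d * k ^ 2 * (t - s))) (b * ζ * s) *
          (w₁ s (k - ξ) * w₂ s (ξ - ζ) * w₃ s ζ)‖) ≤
      ∫⁻ s in Ioo 0 t, ∫⁻ k, ENNReal.ofReal (heatWeight a (d * (t - s)) k) *
        ‖cubicTerm (b * s) (w₁ s) (w₂ s) (w₃ s) k‖ₑ := by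
  have hmeas : Measurable fun p : ℝ × ℝ => ENNReal.ofReal (heatWeight a (d * (t - p.1)) p.2) *
      ‖cubicTerm (b * p.1) (w₁ p.1) (w₂ p.1) (w₃ p.1) p.2‖ₑ := by
    unfold heatWeight
    exact Measurable.mul (by fun_prop) (measurable_cubicTerm b h₁ h₂ h₃).enorm
  rw [lintegral_lintegral_swap hmeas.aemeasurable]
  refine lintegral_mono fun k => ?_
  simp only [integral_expc_mul_eq_exp_mul_cubicTerm]
  rw [intervalIntegral.integral_of_le ht, integral_Ioc_eq_integral_Ioo,
    ENNReal.ofReal_mul (by positivity), ofReal_norm]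
  calc _ ≤ ENNReal.ofReal (|k| ^ a) * ∫⁻ s in Ioo 0 t,
        ‖(Real.exp (-(d * k ^ 2 * (t - s))) : ℂ) * cubicTerm (b * s) (w₁ s) (w₂ s) (w₃ s) k‖ₑ := by
        gcongr
        exact enorm_integral_le_lintegral_enorm _
    _ = _ := by
        rw [← lintegral_const_mul' _ _ ENNReal.ofReal_ne_top]
        refine lintegral_congr fun s => ?_
        rw [enorm_mul, ← mul_assoc, heatWeight, ENNReal.ofReal_mul (by positivity),
          mul_right_comm d, ← ofReal_norm (Complex.ofReal _), Complex.norm_of_nonneg (exp_nonneg _)]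

theorem cubic_marginal_mixed_term_estimate_general {d b α : ℝ} (hd : 0 < d) (hb : b ≠ 0)
    (hα : α < 2) :
    ∃ C : ℝ, 1 ≤ C ∧
      ∀ t : ℝ, 0 ≤ t → ∀ η₁ η₂ η₃ : ℝ, ∀ w₁ w₁' w₂ w₂' w₃ w₃' : ℝ → ℝ → ℂ,
        Measurable (Function.uncurry w₁) → Measurable (Function.uncurry w₂) →
        Measurable (Function.uncurry w₃) →
        (∀ s ∈ Icc 0 t,
          MemW11Ball (w₁ s) (w₁' s) (η₁ * (1 + s) ^ (-(1 : ℝ) / 2)) η₁ ∧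
          MemW11Ball (w₂ s) (w₂' s) (η₂ * (1 + s) ^ (-(1 : ℝ) / 2)) η₂ ∧
          MemW11Ball (w₃ s) (w₃' s) (η₃ * (1 + s) ^ (-(1 : ℝ) / 2)) η₃) →
        ∀ a ∈ Icc 0 α,
          ∫ k : ℝ, |k| ^ a *
              ‖∫ s in (0 : ℝ)..t, ∫ ξ : ℝ, ∫ ζ : ℝ,
                  expc (-(d * k ^ 2 * (t - s))) (b * ζ * s) *
                    (w₁ s (k - ξ) * w₂ s (ξ - ζ) * w₃ s ζ)‖ ≤
            C * (η₁ * η₂ * η₃) * (1 + t) ^ (-(1 + a) / 2) := by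
  set K := (1 + 2 / d) * (1 + √(2 * π / d)) * (1 + π / |b|)
  have hK : 1 ≤ K := one_le_mul_of_one_le_of_one_le (one_le_mul_of_one_le_of_one_le
    (le_add_of_nonneg_right (by positivity)) (le_add_of_nonneg_right (by positivity)))
    (le_add_of_nonneg_right (by positivity))
  have hα' : 0 < 2 - α := sub_pos.2 hα
  refine ⟨K * (8 * (1 + 1 / (2 - α))), one_le_mul_of_one_le_of_one_le hK ?_, ?_⟩
  · linarith [one_div_pos.2 hα']
  intro t ht η₁ η₂ η₃ w₁ w₁' w₂ w₂' w₃ w₃' hw₁ hw₂ hw₃ hw a ⟨ha, haα⟩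
  have hη : 0 ≤ η₁ * η₂ * η₃ := by
    obtain ⟨h₁, h₂, h₃⟩ := hw 0 (left_mem_Icc.2 ht)
    exact mul_nonneg (mul_nonneg h₁.deriv_nonneg h₂.deriv_nonneg) h₃.deriv_nonneg
  rw [← ENNReal.ofReal_le_ofReal_iff (by positivity)]
  calc _ ≤ ∫⁻ s in Ioo 0 t, ∫⁻ k, ENNReal.ofReal (heatWeight a (d * (t - s)) k) *
        ‖cubicTerm (b * s) (w₁ s) (w₂ s) (w₃ s) k‖ₑ :=
        (ofReal_integral_le_lintegral_ofReal fun k => by positivity).trans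
          (lintegral_duhamel_le d b a ht hw₁ hw₂ hw₃)
    _ ≤ ∫⁻ s in Ioo 0 t, ENNReal.ofReal (K * (η₁ * η₂ * η₃)) *
          ENNReal.ofReal (min ((t - s) ^ (-a / 2) * (1 + s) ^ (-2 : ℝ))
            ((t - s) ^ (-(1 + a) / 2) * (1 + s) ^ (-(3 : ℝ) / 2))) := by
        refine setLIntegral_mono' measurableSet_Ioo fun s hs => ?_
        obtain ⟨h₁, h₂, h₃⟩ := hw s (Ioo_subset_Icc_self hs)
        exact lintegral_heatWeight_mul_cubicTerm_le h₁ h₂ h₃ hd hb hs.1.le (sub_pos.2 hs.2) ha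
          (haα.trans hα.le)
    _ ≤ ENNReal.ofReal (K * (η₁ * η₂ * η₃)) *
          ENNReal.ofReal (8 * (1 + 1 / (2 - a)) * (1 + t) ^ (-(1 + a) / 2)) := by
        rw [lintegral_const_mul' _ _ ENNReal.ofReal_ne_top]
        gcongr
        exact lintegral_min_kernel_le ht ha (haα.trans_lt hα)
    _ = ENNReal.ofReal (K * (8 * (1 + 1 / (2 - a))) * (η₁ * η₂ * η₃) *
          (1 + t) ^ (-(1 + a) / 2)) := by
        rw [← ENNReal.ofReal_mul (by positivity)]
        congr 1
        ring
    _ ≤ _ := by gcongr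

/-- Duhamel contribution of a cubic marginal mixed term `u_j u_l u_m` in which
two of the participating components have velocities differing by `b ≠ 0`: for `a ∈ {0,1}`,
`∫ |k|^a |∫_0^t ∫∫ e^{-dk²(t-s)+ibζs} w₁(k-ξ,s) w₂(ξ-ζ,s) w₃(ζ,s) dζ dξ ds| dk
  ≤ C η³ (1+t)^{-(1+a)/2}`. -/
theorem cubic_marginal_mixed_term_estimate (d b : ℝ) (hd : 0 < d) (hb : b ≠ 0) :
    ∃ C : ℝ, 1 ≤ C ∧
      ∀ t : ℝ, 0 ≤ t → ∀ η : ℝ, 0 < η → η ≤ 1 →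
        ∀ w₁ w₁' w₂ w₂' w₃ w₃' : ℝ → ℝ → ℂ,
          Measurable (Function.uncurry w₁) → Measurable (Function.uncurry w₁') →
          Measurable (Function.uncurry w₂) → Measurable (Function.uncurry w₂') →
          Measurable (Function.uncurry w₃) → Measurable (Function.uncurry w₃') →
          (∀ s ∈ Set.Icc (0 : ℝ) t,
            HasWeakDeriv (w₁ s) (w₁' s) ∧ HasWeakDeriv (w₂ s) (w₂' s) ∧
            HasWeakDeriv (w₃ s) (w₃' s) ∧
            Integrable (w₁ s) ∧ Integrable (w₁' s) ∧
            Integrable (w₂ s) ∧ Integrable (w₂' s) ∧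
            Integrable (w₃ s) ∧ Integrable (w₃' s) ∧
            (∫ k : ℝ, ‖w₁ s k‖) ≤ η * (1 + s) ^ (-(1 : ℝ) / 2) ∧
            (∫ k : ℝ, ‖w₂ s k‖) ≤ η * (1 + s) ^ (-(1 : ℝ) / 2) ∧
            (∫ k : ℝ, ‖w₃ s k‖) ≤ η * (1 + s) ^ (-(1 : ℝ) / 2) ∧
            (∫ k : ℝ, ‖w₁' s k‖) ≤ η ∧
            (∫ k : ℝ, ‖w₂' s k‖) ≤ η ∧
            (∫ k : ℝ, ‖w₃' s k‖) ≤ η) →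
          ∀ a : ℕ, a ≤ 1 →
            (∫ k : ℝ, |k| ^ a *
                ‖∫ s in (0 : ℝ)..t, ∫ ξ : ℝ, ∫ ζ : ℝ,
                    expc (-(d * k ^ 2 * (t - s))) (b * ζ * s) *
                      (w₁ s (k - ξ) * w₂ s (ξ - ζ) * w₃ s ζ)‖) ≤
              C * η ^ 3 * (1 + t) ^ (-(1 + (a : ℝ)) / 2) := by
  obtain ⟨C, hC, hbound⟩ := cubic_marginal_mixed_term_estimate_general hd hb one_lt_two
  refine ⟨C, hC, ?_⟩
  intro t ht η _ _ w₁ w₁' w₂ w₂' w₃ w₃' hw₁ _ hw₂ _ hw₃ _ hw a ha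
  have hball : ∀ s ∈ Icc 0 t,
      MemW11Ball (w₁ s) (w₁' s) (η * (1 + s) ^ (-(1 : ℝ) / 2)) η ∧
      MemW11Ball (w₂ s) (w₂' s) (η * (1 + s) ^ (-(1 : ℝ) / 2)) η ∧
      MemW11Ball (w₃ s) (w₃' s) (η * (1 + s) ^ (-(1 : ℝ) / 2)) η := by
    intro s hs
    obtain ⟨d₁, d₂, d₃, i₁, i₁', i₂, i₂', i₃, i₃', n₁, n₂, n₃, n₁', n₂', n₃'⟩ := hw s hs
    exact ⟨⟨⟨d₁, i₁, i₁'⟩, n₁, n₁'⟩, ⟨⟨d₂, i₂, i₂'⟩, n₂, n₂'⟩, ⟨⟨d₃, i₃, i₃'⟩, n₃, n₃'⟩⟩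
  simpa [rpow_natCast, pow_three, mul_assoc] using
    hbound t ht η η η w₁ w₁' w₂ w₂' w₃ w₃' hw₁ hw₂ hw₃ hball a ⟨by positivity, by exact_mod_cast ha⟩
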